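/- arXiv:1307.6944 — 2 statements merged into one kernel-verified Lean document; each statement's English description precedes it below -/
import Mathlib

section
/- Every 2-intersecting hypergraph (with all edges of size at least 2) has a vertex coloring with at most 5 colors such that every edge e receives at least min(|e|, 3) distinct colors. -/
def Good3 {V : Type*} (c : V → Fin 5) (h : Finset V) : Prop :=
  ∃ x ∈ h, ∃ y ∈ h, ∃ z ∈ h, c x ≠ c y ∧ c x ≠ c z ∧ c y ≠ c z

theorem good_of_not_two {V : Type*} (c : V → Fin 5) (h : Finset V)
    (H : ∀ i j : Fin 5, ¬ ∀ v ∈ h, c v = i ∨ c v = j) : Good3 c h := by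
  have h0 := H 0 0
  push Not at h0
  obtain ⟨x, hx, -⟩ := h0
  have h1 := H (c x) (c x)
  push Not at h1
  obtain ⟨y, hy, hxy, -⟩ := h1
  have h2 := H (c x) (c y)
  push Not at h2
  obtain ⟨z, hz, h3, h4⟩ := h2
  exact ⟨x, hx, y, hy, z, hz, hxy.symm, h3.symm, h4.symm⟩

structure Sys {V : Type*} (M : Set (Finset V)) : Prop where
  two : ∀ e ∈ M, ∀ f ∈ M, ∃ p q, p ≠ q ∧ p ∈ e ∧ p ∈ f ∧ q ∈ e ∧ q ∈ f
  anti : ∀ e ∈ M, ∀ f ∈ M, e ≠ f → ∃ p ∈ e, p ∉ f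

/-- E, F, G all nonempty -/
theorem case0 {V : Type*} [DecidableEq V] {M : Set (Finset V)} (S : Sys M)
    {e f g : Finset V} (he : e ∈ M) (hf : f ∈ M) (hg : g ∈ M)
    (h0 : ∀ v, v ∈ e → v ∈ f → v ∈ g → False)
    {y z w : V} (ye : y ∈ e) (yf : y ∉ f) (yg : y ∉ g)
    (ze : z ∉ e) (zf : z ∈ f) (zg : z ∉ g)
    (we : w ∉ e) (wf : w ∉ f) (wg : w ∈ g)
    (mE : ∀ h ∈ M, (∃ v ∈ h, v ∈ f ∧ v ∈ g) ∨ (∃ v ∈ h, v ∉ e ∧ v ∉ f ∧ v ∉ g) ∨ y ∈ h)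
    (mF : ∀ h ∈ M, (∃ v ∈ h, v ∈ e ∧ v ∈ g) ∨ (∃ v ∈ h, v ∉ e ∧ v ∉ f ∧ v ∉ g) ∨ z ∈ h)
    (mG : ∀ h ∈ M, (∃ v ∈ h, v ∈ e ∧ v ∈ f) ∨ (∃ v ∈ h, v ∉ e ∧ v ∉ f ∧ v ∉ g) ∨ w ∈ h) :
    ∃ c : V → Fin 5, ∀ h ∈ M, Good3 c h := by
  let c : V → Fin 5 := fun v =>
    if v = y ∨ (v ∈ f ∧ v ∈ g) then 0
    else if v = z ∨ (v ∈ e ∧ v ∈ g) then 1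
    else if v ∈ e ∨ v ∈ f then 2
    else if v ∈ g then 3 else 4
  have c0 : ∀ v, c v = 0 → v = y ∨ (v ∈ f ∧ v ∈ g) := by intro v; simp only [c]; grind
  have c1 : ∀ v, c v = 1 → v = z ∨ (v ∈ e ∧ v ∈ g) := by intro v; simp only [c]; grind
  have c2 : ∀ v, c v = 2 → (v ∈ e ∨ v ∈ f) ∧ v ∉ g ∧ v ≠ y ∧ v ≠ z := by
    intro v; simp only [c]; grind
  have c3 : ∀ v, c v = 3 → v ∉ e ∧ v ∉ f ∧ v ∈ g := by intro v; simp only [c]; grind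
  have c4 : ∀ v, c v = 4 → v ∉ e ∧ v ∉ f ∧ v ∉ g := by intro v; simp only [c]; grind
  obtain ⟨a, -, -, ae, af, -⟩ := S.two e he f hf
  obtain ⟨b, -, -, be, bg, -⟩ := S.two e he g hg
  obtain ⟨d, -, -, df, dg, -⟩ := S.two f hf g hg
  have ca : c a = 2 := by simp only [c]; grind
  have cb : c b = 1 := by simp only [c]; grind
  have cd : c d = 0 := by simp only [c]; grind
  have cy : c y = 0 := by simp only [c]; grind
  have cz : c z = 1 := by simp only [c]; grind
  have cw : c w = 3 := by simp only [c]; grind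
  clear_value c
  refine ⟨c, fun h hh => ?_⟩
  by_cases hhe : h = e
  · subst hhe; exact ⟨a, ae, b, be, y, ye, by simp [*]⟩
  by_cases hhf : h = f
  · subst hhf; exact ⟨a, af, d, df, z, zf, by simp [*]⟩
  by_cases hhg : h = g
  · subst hhg; exact ⟨w, wg, b, bg, d, dg, by simp [*]⟩
  apply good_of_not_two
  intro i j hij
  obtain ⟨p1, p2, hp, p1h, p1e, p2h, p2e⟩ := S.two h hh e he
  obtain ⟨q1, q2, hq, q1h, q1f, q2h, q2f⟩ := S.two h hh f hf
  obtain ⟨r1, r2, hr, r1h, r1g, r2h, r2g⟩ := S.two h hh g hg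
  replace mE := mE h hh
  replace mF := mF h hh
  replace mG := mG h hh
  clear S hhe hhf hhg
  let K : Fin 5 → V → Prop := ![fun v => v = y ∨ (v ∈ f ∧ v ∈ g),
    fun v => v = z ∨ (v ∈ e ∧ v ∈ g),
    fun v => (v ∈ e ∨ v ∈ f) ∧ v ∉ g ∧ v ≠ y ∧ v ≠ z,
    fun v => v ∉ e ∧ v ∉ f ∧ v ∈ g,
    fun v => v ∉ e ∧ v ∉ f ∧ v ∉ g]
  have hK : ∀ v k, c v = k → K k v := by
    intro v k hk
    fin_cases k
    · exact c0 v hk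
    · exact c1 v hk
    · exact c2 v hk
    · exact c3 v hk
    · exact c4 v hk
  replace hij : ∀ v ∈ h, K i v ∨ K j v := fun v hv => (hij v hv).imp (hK v i) (hK v j)
  clear hK c0 c1 c2 c3 c4
  clear ca cb cd cy cz cw
  fin_cases i <;> fin_cases j <;> simp [K] at hij <;> clear K <;> clear * - h0 ye yf yg ze zf zg we wf wg hij hp p1h p1e p2h p2e hq q1h q1f q2h q2f hr r1h r1g r2h r2g mE mF mG <;> grind (splits := 30)

/-- G empty, E and F nonempty -/
theorem case1 {V : Type*} [DecidableEq V] {M : Set (Finset V)} (S : Sys M)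
    {e f g : Finset V} (he : e ∈ M) (hf : f ∈ M) (hg : g ∈ M)
    (h0 : ∀ v, v ∈ e → v ∈ f → v ∈ g → False)
    {y z : V} (ye : y ∈ e) (yf : y ∉ f) (yg : y ∉ g)
    (ze : z ∉ e) (zf : z ∈ f) (zg : z ∉ g)
    (hG : ∀ v ∈ g, v ∈ e ∨ v ∈ f)
    (mE : ∀ h ∈ M, (∃ v ∈ h, v ∈ f ∧ v ∈ g) ∨ (∃ v ∈ h, v ∉ e ∧ v ∉ f ∧ v ∉ g) ∨ y ∈ h)
    (mF : ∀ h ∈ M, (∃ v ∈ h, v ∈ e ∧ v ∈ g) ∨ (∃ v ∈ h, v ∉ e ∧ v ∉ f ∧ v ∉ g) ∨ z ∈ h) :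
    ∃ c : V → Fin 5, ∀ h ∈ M, Good3 c h := by
  obtain ⟨a, -, -, ae, af, -⟩ := S.two e he f hf
  obtain ⟨b, b', hb, be, bg, be', bg'⟩ := S.two e he g hg
  obtain ⟨d, -, -, df, dg, -⟩ := S.two f hf g hg
  let c : V → Fin 5 := fun v =>
    if v = b ∨ v = z then 0
    else if v ∈ e ∧ v ∈ g then 1
    else if v ∈ f ∧ v ∈ g then 2
    else if v ≠ y ∧ (v ∈ e ∨ v ∈ f) then 3 else 4
  have c0 : ∀ v, c v = 0 → v = b ∨ v = z := by intro v; simp only [c]; grind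
  have c1 : ∀ v, c v = 1 → v ∈ e ∧ v ∈ g ∧ v ≠ b := by intro v; simp only [c]; grind
  have c2 : ∀ v, c v = 2 → v ∈ f ∧ v ∈ g := by intro v; simp only [c]; grind
  have c3 : ∀ v, c v = 3 → (v ∈ e ∨ v ∈ f) ∧ v ∉ g ∧ v ≠ y ∧ v ≠ z := by
    intro v; simp only [c]; grind
  have c4 : ∀ v, c v = 4 → v = y ∨ (v ∉ e ∧ v ∉ f ∧ v ∉ g) := by intro v; simp only [c]; grind
  have ca : c a = 3 := by simp only [c]; grind
  have cb : c b = 0 := by simp only [c]; grind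
  have cb' : c b' = 1 := by simp only [c]; grind
  have cd : c d = 2 := by simp only [c]; grind
  have cz : c z = 0 := by simp only [c]; grind
  clear_value c
  refine ⟨c, fun h hh => ?_⟩
  by_cases hhe : h = e
  · subst hhe; exact ⟨a, ae, b, be, b', be', by simp [*]⟩
  by_cases hhf : h = f
  · subst hhf; exact ⟨a, af, d, df, z, zf, by simp [*]⟩
  by_cases hhg : h = g
  · subst hhg; exact ⟨b, bg, b', bg', d, dg, by simp [*]⟩
  apply good_of_not_two
  intro i j hij
  obtain ⟨p1, p2, hp, p1h, p1e, p2h, p2e⟩ := S.two h hh e he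
  obtain ⟨q1, q2, hq, q1h, q1f, q2h, q2f⟩ := S.two h hh f hf
  obtain ⟨r1, r2, hr, r1h, r1g, r2h, r2g⟩ := S.two h hh g hg
  obtain ⟨n, nh, ng⟩ := S.anti h hh g hg hhg
  replace mE := mE h hh
  replace mF := mF h hh
  clear S hhe hhf hhg
  let K : Fin 5 → V → Prop := ![fun v => v = b ∨ v = z,
    fun v => v ∈ e ∧ v ∈ g ∧ v ≠ b,
    fun v => v ∈ f ∧ v ∈ g,
    fun v => (v ∈ e ∨ v ∈ f) ∧ v ∉ g ∧ v ≠ y ∧ v ≠ z,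
    fun v => v = y ∨ (v ∉ e ∧ v ∉ f ∧ v ∉ g)]
  have hK : ∀ v k, c v = k → K k v := by
    intro v k hk
    fin_cases k
    · exact c0 v hk
    · exact c1 v hk
    · exact c2 v hk
    · exact c3 v hk
    · exact c4 v hk
  replace hij : ∀ v ∈ h, K i v ∨ K j v := fun v hv => (hij v hv).imp (hK v i) (hK v j)
  clear hK c0 c1 c2 c3 c4
  clear ca cb cb' cd cz
  fin_cases i <;> fin_cases j <;> simp [K] at hij <;> clear K <;> clear * - h0 ye yf yg ze zf zg hij hp p1h p1e p2h p2e hq q1h q1f q2h q2f hr r1h r1g r2h r2g mE mF hG be bg nh ng <;> grind (splits := 30)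

theorem minfact {V : Type*} [DecidableEq V] {M : Set (Finset V)}
    {e f g : Finset V} (hf : f ∈ M) (hg : g ∈ M)
    (hmin : ∀ e' ∈ M, ∀ f' ∈ M, ∀ g' ∈ M, (∀ v, v ∈ e' → v ∈ f' → v ∈ g' → False) →
      (e ∪ f ∪ g).card ≤ (e' ∪ f' ∪ g').card)
    {y : V} (ye : y ∈ e) (yf : y ∉ f) (yg : y ∉ g) :
    ∀ h ∈ M, (∃ v ∈ h, v ∈ f ∧ v ∈ g) ∨ (∃ v ∈ h, v ∉ e ∧ v ∉ f ∧ v ∉ g) ∨ y ∈ h := by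
  intro h hh
  by_contra hcon
  push Not at hcon
  obtain ⟨h1, h2, h3⟩ := hcon
  have := hmin h hh f hf g hg (fun v a b d => h1 v a b d)
  have hlt : h ∪ f ∪ g ⊂ e ∪ f ∪ g := by
    rw [Finset.ssubset_iff_of_subset]
    · exact ⟨y, by simp [ye], by simp [*]⟩
    · intro v hv
      simp only [Finset.mem_union] at *
      by_contra hv'
      push Not at hv'
      grind
  have := Finset.card_lt_card hlt
  omega

/-- F and G empty -/
theorem case2 {V : Type*} [DecidableEq V] {M : Set (Finset V)} (S : Sys M)
    {e f g : Finset V} (he : e ∈ M) (hf : f ∈ M) (hg : g ∈ M)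
    (h0 : ∀ v, v ∈ e → v ∈ f → v ∈ g → False)
    (hmin : ∀ e' ∈ M, ∀ f' ∈ M, ∀ g' ∈ M, (∀ v, v ∈ e' → v ∈ f' → v ∈ g' → False) →
      (e ∪ f ∪ g).card ≤ (e' ∪ f' ∪ g').card)
    (hF : ∀ v ∈ f, v ∈ e ∨ v ∈ g)
    (hG : ∀ v ∈ g, v ∈ e ∨ v ∈ f) :
    ∃ c : V → Fin 5, ∀ h ∈ M, Good3 c h := by
  obtain ⟨a, a', ha, ae, af, ae', af'⟩ := S.two e he f hf
  obtain ⟨b, -, -, be, bg, -⟩ := S.two e he g hg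
  obtain ⟨d, d', hd, df, dg, df', dg'⟩ := S.two f hf g hg
  by_cases hbad : ∃ h ∈ M, (∀ v ∈ h, v ∈ e → v ∈ g → False) ∧ (∀ v ∈ h, v ∈ e ∨ v ∈ g) ∧
      a ∉ h ∧ d ∉ h
  · obtain ⟨h, hh, h1, h2, h3, h4⟩ := hbad
    have hle : ∀ u : Finset V, u ⊆ e ∪ f ∪ g → ∀ n, (e ∪ f ∪ g).card ≤ n → u.card ≤ n :=
      fun u hu n hn => (Finset.card_le_card hu).trans hn
    have m1 := minfact (e := e) (f := g) (g := h) (y := a) hg hh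
      (fun e' he' f' hf' g' hg' h' => hle _ (by clear * - h2; intro v; grind) _ (hmin e' he' f' hf' g' hg' h'))
      ae (fun hag => h0 a ae af hag) h3
    have m2 := minfact (e := g) (f := e) (g := h) (y := d) he hh
      (fun e' he' f' hf' g' hg' h' => hle _ (by clear * - h2; intro v; grind) _ (hmin e' he' f' hf' g' hg' h'))
      dg (fun hag => h0 d hag df dg) h4
    exact case1 S he hg hh (fun v x y z => h1 v z x y) ae (fun hag => h0 a ae af hag) h3
      (fun hag => h0 d hag df dg) dg h4 h2 m1 (by clear * - m2; grind)
  clear hmin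
  let c : V → Fin 5 := fun v =>
    if v = a then 0
    else if v ∈ e ∧ v ∈ g then 1
    else if v ≠ d ∧ v ∈ f ∧ v ∈ g then 2
    else if v ∈ e then 3 else 4
  have c0 : ∀ v, c v = 0 → v = a := by intro v; simp only [c]; grind
  have c1 : ∀ v, c v = 1 → v ∈ e ∧ v ∈ g := by intro v; simp only [c]; grind
  have c2 : ∀ v, c v = 2 → v ∈ f ∧ v ∈ g ∧ v ≠ d := by intro v; simp only [c]; grind
  have c3 : ∀ v, c v = 3 → v ∈ e ∧ v ∉ g ∧ v ≠ a := by
    intro v; simp only [c]; grind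
  have c4 : ∀ v, c v = 4 → v = d ∨ (v ∉ e ∧ v ∉ f ∧ v ∉ g) := by intro v; simp only [c]; grind
  have ca : c a = 0 := by simp only [c]; grind
  have ca' : c a' = 3 := by simp only [c]; grind
  have cb : c b = 1 := by simp only [c]; grind
  have cd : c d = 4 := by simp only [c]; grind
  have cd' : c d' = 2 := by simp only [c]; grind
  clear_value c
  refine ⟨c, fun h hh => ?_⟩
  by_cases hhe : h = e
  · subst hhe; exact ⟨a, ae, b, be, a', ae', by simp [*]⟩
  by_cases hhf : h = f
  · subst hhf; exact ⟨a, af, d, df, a', af', by simp [*]⟩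
  by_cases hhg : h = g
  · subst hhg; exact ⟨b, bg, d', dg', d, dg, by simp [*]⟩
  apply good_of_not_two
  intro i j hij
  obtain ⟨p1, p2, hp, p1h, p1e, p2h, p2e⟩ := S.two h hh e he
  obtain ⟨q1, q2, hq, q1h, q1f, q2h, q2f⟩ := S.two h hh f hf
  obtain ⟨r1, r2, hr, r1h, r1g, r2h, r2g⟩ := S.two h hh g hg
  obtain ⟨n, nh, ng⟩ := S.anti h hh g hg hhg
  obtain ⟨m, mh, me⟩ := S.anti h hh e he hhe
  obtain ⟨l, lh, lf⟩ := S.anti h hh f hf hhf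
  have hbad' : (∃ v ∈ h, v ∈ e ∧ v ∈ g) ∨ (∃ v ∈ h, v ∉ e ∧ v ∉ g) ∨ a ∈ h ∨ d ∈ h := by
    by_contra hc
    push Not at hc
    obtain ⟨k1, k2, k3, k4⟩ := hc
    refine hbad ⟨h, hh, k1, fun v hv => ?_, k3, k4⟩
    by_contra hv'
    push Not at hv'
    exact hv'.2 (k2 v hv hv'.1)
  let K : Fin 5 → V → Prop := ![fun v => v = a, fun v => v ∈ e ∧ v ∈ g,
    fun v => v ∈ f ∧ v ∈ g ∧ v ≠ d, fun v => v ∈ e ∧ v ∉ g ∧ v ≠ a,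
    fun v => v = d ∨ (v ∉ e ∧ v ∉ f ∧ v ∉ g)]
  have hK : ∀ v k, c v = k → K k v := by
    intro v k hk
    fin_cases k
    · exact c0 v hk
    · exact c1 v hk
    · exact c2 v hk
    · exact c3 v hk
    · exact c4 v hk
  replace hij : ∀ v ∈ h, K i v ∨ K j v := fun v hv => (hij v hv).imp (hK v i) (hK v j)
  clear hK c0 c1 c2 c3 c4 ca ca' cb cd cd'
  fin_cases i <;> fin_cases j <;> simp [K] at hij <;> clear K <;>
    clear * - h0 hij hp p1h p1e p2h p2e hq q1h q1f q2h q2f hr r1h r1g r2h r2g ae af df dg nh ng mh me lh lf hbad' <;>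
    grind (splits := 30)

theorem caseTriple {V : Type*} [DecidableEq V] {M : Set (Finset V)} (S : Sys M)
    {e f g : Finset V} (he : e ∈ M) (hf : f ∈ M) (hg : g ∈ M)
    (h0 : ∀ v, v ∈ e → v ∈ f → v ∈ g → False)
    (hmin : ∀ e' ∈ M, ∀ f' ∈ M, ∀ g' ∈ M, (∀ v, v ∈ e' → v ∈ f' → v ∈ g' → False) →
      (e ∪ f ∪ g).card ≤ (e' ∪ f' ∪ g').card) :
    ∃ c : V → Fin 5, ∀ h ∈ M, Good3 c h := by
  have u1 : f ∪ e ∪ g = e ∪ f ∪ g := by clear hmin; grind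
  have u2 : g ∪ e ∪ f = e ∪ f ∪ g := by clear hmin; grind
  have mE : ∀ y, y ∈ e → y ∉ f → y ∉ g → _ := fun y a b d => minfact (e := e) hf hg hmin a b d
  have mF : ∀ y, y ∈ f → y ∉ e → y ∉ g → _ := fun y a b d =>
    minfact (e := f) he hg (by rw [u1]; exact hmin) a b d
  have mG : ∀ y, y ∈ g → y ∉ e → y ∉ f → _ := fun y a b d =>
    minfact (e := g) he hf (by rw [u2]; exact hmin) a b d
  by_cases hE : ∃ y, y ∈ e ∧ y ∉ f ∧ y ∉ g <;>
  by_cases hF : ∃ y, y ∈ f ∧ y ∉ e ∧ y ∉ g <;>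
  by_cases hG : ∃ y, y ∈ g ∧ y ∉ e ∧ y ∉ f
  · obtain ⟨y, y1, y2, y3⟩ := hE
    obtain ⟨z, z1, z2, z3⟩ := hF
    obtain ⟨w, w1, w2, w3⟩ := hG
    have a1 := mE y y1 y2 y3
    have a2 := mF z z1 z2 z3
    have a3 := mG w w1 w2 w3
    exact case0 S he hf hg h0 y1 y2 y3 z2 z1 z3 w2 w3 w1 a1 (by clear hmin mE mF mG; grind) (by clear hmin mE mF mG; grind)
  · obtain ⟨y, y1, y2, y3⟩ := hE
    obtain ⟨z, z1, z2, z3⟩ := hF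
    have a1 := mE y y1 y2 y3
    have a2 := mF z z1 z2 z3
    exact case1 S he hf hg h0 y1 y2 y3 z2 z1 z3 (by clear hmin mE mF mG; grind) a1 (by clear hmin mE mF mG; grind)
  · obtain ⟨y, y1, y2, y3⟩ := hE
    obtain ⟨w, w1, w2, w3⟩ := hG
    have a1 := mE y y1 y2 y3
    have a2 := mG w w1 w2 w3
    exact case1 S he hg hf (by clear hmin mE mF mG; grind) y1 y3 y2 w2 w1 w3 (by clear hmin mE mF mG; grind) (by clear hmin mE mF mG; grind) (by clear hmin mE mF mG; grind)
  · exact case2 S he hf hg h0 hmin (by clear hmin mE mF mG; grind) (by clear hmin mE mF mG; grind)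
  · obtain ⟨z, z1, z2, z3⟩ := hF
    obtain ⟨w, w1, w2, w3⟩ := hG
    have a1 := mF z z1 z2 z3
    have a2 := mG w w1 w2 w3
    exact case1 S hf hg he (by clear hmin mE mF mG; grind) z1 z3 z2 w3 w1 w2 (by clear hmin mE mF mG; grind) (by clear hmin mE mF mG; grind) (by clear hmin mE mF mG; grind)
  · exact case2 S hf he hg (by clear hmin mE mF mG; grind) (by rw [u1]; exact hmin) (by clear hmin mE mF mG; grind) (by clear hmin mE mF mG; grind)
  · exact case2 S hg he hf (by clear hmin mE mF mG; grind) (by rw [u2]; exact hmin) (by clear hmin mE mF mG; grind) (by clear hmin mE mF mG; grind)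
  · exact case2 S he hf hg h0 hmin (by clear hmin mE mF mG; grind) (by clear hmin mE mF mG; grind)

theorem casePair {V : Type*} [DecidableEq V] {M : Set (Finset V)} (S : Sys M)
    (h3 : ∀ e ∈ M, ∀ f ∈ M, ∀ g ∈ M, ∃ v, v ∈ e ∧ v ∈ f ∧ v ∈ g)
    {e f : Finset V} (he : e ∈ M) (hf : f ∈ M) (hef : e ≠ f)
    (hmin : ∀ e' ∈ M, ∀ f' ∈ M, e' ≠ f' → (e ∩ f).card ≤ (e' ∩ f').card) :
    ∃ c : V → Fin 5, ∀ h ∈ M, Good3 c h := by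
  obtain ⟨a, b, hab, ae, af, be, bf⟩ := S.two e he f hf
  obtain ⟨y, ye, yf⟩ := S.anti e he f hf hef
  obtain ⟨z, zf, ze⟩ := S.anti f hf e he hef.symm
  let c : V → Fin 5 := fun v =>
    if v = a then 0 else if v ∈ e ∧ v ∈ f then 1 else if v ∈ e then 2 else if v ∈ f then 3 else 4
  refine ⟨c, fun h hh => ?_⟩
  by_cases hhe : h = e
  · subst hhe; exact ⟨a, ae, b, be, y, ye, by simp only [c]; grind⟩
  by_cases hhf : h = f
  · subst hhf; exact ⟨a, af, b, bf, z, zf, by simp only [c]; grind⟩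
  obtain ⟨n, nh, ne⟩ := S.anti h hh e he hhe
  obtain ⟨m, mh, mf⟩ := S.anti h hh f hf hhf
  have k1 : (∃ v ∈ h, v ∈ e ∧ v ∉ f) ∨ (a ∈ h ∧ b ∈ h) := by
    by_contra hc
    push Not at hc
    have hsub : h ∩ e ⊆ e ∩ f := by
      intro v hv
      have := hc.1 v
      grind
    have := Finset.eq_of_subset_of_card_le hsub (hmin h hh e he hhe)
    have ha : a ∈ h ∩ e := by rw [this]; simp [*]
    have hb : b ∈ h ∩ e := by rw [this]; simp [*]
    grind
  have k2 : (∃ v ∈ h, v ∈ f ∧ v ∉ e) ∨ (a ∈ h ∧ b ∈ h) := by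
    by_contra hc
    push Not at hc
    have hsub : h ∩ f ⊆ e ∩ f := by
      intro v hv
      have := hc.1 v
      grind
    have := Finset.eq_of_subset_of_card_le hsub (hmin h hh f hf hhf)
    have ha : a ∈ h ∩ f := by rw [this]; simp [*]
    have hb : b ∈ h ∩ f := by rw [this]; simp [*]
    grind
  obtain ⟨x, xh, xe, xf⟩ := h3 h hh e he f hf
  by_cases habh : a ∈ h ∧ b ∈ h
  · exact ⟨a, habh.1, b, habh.2, n, nh, by simp only [c]; grind⟩
  · obtain ⟨p, ph, pe, pf⟩ := k1.resolve_right habh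
    obtain ⟨q, qh, qf, qe⟩ := k2.resolve_right habh
    exact ⟨x, xh, p, ph, q, qh, by simp only [c]; grind⟩

theorem sysMain {V : Type*} [DecidableEq V] {M : Set (Finset V)} (S : Sys M)
    (hs : ∀ e ∈ M, 2 < e.card) :
    ∃ c : V → Fin 5, ∀ h ∈ M, Good3 c h := by
  by_cases hT : ∃ n, ∃ e ∈ M, ∃ f ∈ M, ∃ g ∈ M,
      (∀ v, v ∈ e → v ∈ f → v ∈ g → False) ∧ (e ∪ f ∪ g).card = n
  · classical
    obtain ⟨e, he, f, hf, g, hg, h0, hn⟩ := Nat.find_spec hT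
    refine caseTriple S he hf hg h0 ?_
    intro e' he' f' hf' g' hg' h0'
    rw [hn]
    exact Nat.find_min' hT ⟨e', he', f', hf', g', hg', h0', rfl⟩
  have h3 : ∀ e ∈ M, ∀ f ∈ M, ∀ g ∈ M, ∃ v, v ∈ e ∧ v ∈ f ∧ v ∈ g := by
    intro e he f hf g hg
    by_contra hc
    push Not at hc
    exact hT ⟨_, e, he, f, hf, g, hg, fun v a b d => hc v a b d, rfl⟩
  by_cases hP : ∃ n, ∃ e ∈ M, ∃ f ∈ M, e ≠ f ∧ (e ∩ f).card = n
  · classical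
    obtain ⟨e, he, f, hf, hef, hn⟩ := Nat.find_spec hP
    refine casePair S h3 he hf hef ?_
    intro e' he' f' hf' h'
    rw [hn]
    exact Nat.find_min' hP ⟨e', he', f', hf', h', rfl⟩
  by_cases hE : ∃ e, e ∈ M
  · obtain ⟨e, he⟩ := hE
    obtain ⟨x, y, z, hx, hy, hz, hxy, hxz, hyz⟩ := Finset.two_lt_card_iff.1 (hs e he)
    refine ⟨fun v => if v = x then 0 else if v = y then 1 else 2, fun h hh => ?_⟩
    have : h = e := by
      by_contra hne
      exact hP ⟨_, h, hh, e, he, hne, rfl⟩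
    subst this
    exact ⟨x, hx, y, hy, z, hz, by grind⟩
  · exact ⟨fun _ => 0, fun h hh => (hE ⟨h, hh⟩).elim⟩

theorem two_intersecting_has_3strong_5coloring
    {V : Type*} [DecidableEq V] (H : Set (Finset V))
    (hsize : ∀ e ∈ H, 2 ≤ e.card)
    (hint : ∀ e ∈ H, ∀ f ∈ H, 2 ≤ (e ∩ f).card) :
    ∃ c : V → Fin 5, ∀ e ∈ H, min e.card 3 ≤ (e.image c).card := by
  by_cases h2 : ∃ e ∈ H, e.card = 2
  · obtain ⟨e, he, hc⟩ := h2
    obtain ⟨a, b, hab, rfl⟩ := Finset.card_eq_two.1 hc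
    refine ⟨fun v => if v = a then 0 else if v = b then 1 else 2, fun f hf => ?_⟩
    have hsub : {a, b} ⊆ f := by
      have := Finset.eq_of_subset_of_card_le (Finset.inter_subset_left (s₁ := {a, b}) (s₂ := f))
        (by rw [hc]; exact hint _ he _ hf)
      exact Finset.inter_eq_left.1 this
    have ha : a ∈ f := hsub (by simp)
    have hb : b ∈ f := hsub (by simp)
    by_cases h3 : ∃ v ∈ f, v ≠ a ∧ v ≠ b
    · obtain ⟨v, hv, hva, hvb⟩ := h3
      refine (min_le_right _ _).trans ?_
      apply Nat.succ_le_of_lt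
      rw [Finset.two_lt_card_iff]
      refine ⟨0, 1, 2, ?_, ?_, ?_, by decide, by decide, by decide⟩ <;> rw [Finset.mem_image]
      · exact ⟨a, ha, by simp⟩
      · exact ⟨b, hb, by simp [hab.symm]⟩
      · exact ⟨v, hv, by simp [*]⟩
    · have hfe : f = {a, b} := by
        push Not at h3
        ext v
        have := h3 v
        grind
      refine (min_le_left _ _).trans ?_
      rw [hfe, hc]
      apply Nat.succ_le_of_lt
      rw [Finset.one_lt_card_iff]
      refine ⟨0, 1, ?_, ?_, by decide⟩ <;> rw [Finset.mem_image]
      · exact ⟨a, by simp, by simp⟩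
      · exact ⟨b, by simp, by simp [hab.symm]⟩
  push Not at h2
  let M : Set (Finset V) := {e | e ∈ H ∧ ∀ f ∈ H, f ⊆ e → f = e}
  have S : Sys M := by
    constructor
    · intro e he f hf
      obtain ⟨p, q, hp, hq, hpq⟩ := Finset.one_lt_card_iff.1 (hint e he.1 f hf.1)
      rw [Finset.mem_inter] at hp hq
      exact ⟨p, q, hpq, hp.1, hp.2, hq.1, hq.2⟩
    · intro e he f hf hne
      by_contra hc
      push Not at hc
      exact hne (hf.2 e he.1 hc)
  obtain ⟨c, hcM⟩ := sysMain S (fun e he => by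
    have := hsize e he.1
    have := h2 e he.1
    omega)
  refine ⟨c, fun e he => ?_⟩
  have hex : ∃ m ∈ M, m ⊆ e := by
    induction e using Finset.strongInduction with
    | H e ih =>
      by_cases hm : e ∈ M
      · exact ⟨e, hm, subset_rfl⟩
      · have : ∃ f ∈ H, f ⊆ e ∧ f ≠ e := by
          by_contra hc
          push Not at hc
          exact hm ⟨he, hc⟩
        obtain ⟨f, hf, hfe, hne⟩ := this
        obtain ⟨m, hm, hmf⟩ := ih f (hfe.ssubset_of_ne hne) hf
        exact ⟨m, hm, hmf.trans hfe⟩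
  obtain ⟨m, hm, hme⟩ := hex
  obtain ⟨x, hx, y, hy, z, hz, h1, h2, h3⟩ := hcM m hm
  refine (min_le_right _ _).trans ?_
  apply Nat.succ_le_of_lt
  rw [Finset.two_lt_card_iff]
  exact ⟨c x, c y, c z, Finset.mem_image_of_mem _ (hme hx), Finset.mem_image_of_mem _ (hme hy),
    Finset.mem_image_of_mem _ (hme hz), h1, h2, h3⟩
end

section
/- For every t ≥ 2, if a hypergraph H has property P_t (meaning: for every i with 2 ≤ i ≤ t, any i edges of H have a common intersection of size at least t+1-i), then H has a vertex coloring with at most t+1 colors such that every edge e receives at least min(|e|, t) distinct colors. -/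
theorem recolor_aux {V : Type*} [DecidableEq V] (n : ℕ) (e : Finset V) :
    ∀ (k : ℕ) (c : V → Fin n), n ≤ (e.image c).card + k →
    ∃ c' : V → Fin n, min e.card n ≤ (e.image c').card ∧
      ∀ f ⊆ e, (f.image c).card ≤ (f.image c').card := by
  intro k
  induction k with
  | zero => exact fun c hc => ⟨c, by omega, fun f _ => le_rfl⟩
  | succ k ih =>
    intro c hc
    by_cases hm : min e.card n ≤ (e.image c).card
    · exact ⟨c, hm, fun f _ => le_rfl⟩
    have h1 : (e.image c).card < e.card := by omega
    have h2 : (e.image c).card < n := by omega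
    obtain ⟨x, hx, y, hy, hxy, hc2⟩ :=
      Finset.exists_ne_map_eq_of_card_lt_of_maps_to h1
        (f := c) (fun a ha => Finset.mem_coe.2 (Finset.mem_image_of_mem c ha))
    obtain ⟨b, hb⟩ : ∃ b, b ∉ e.image c := by
      by_contra hcon
      push Not at hcon
      have : e.image c = Finset.univ := by ext a; simp [hcon a]
      rw [this] at h2
      simp at h2
    have hb' : ∀ z ∈ e, c z ≠ b := fun z hz h => hb (Finset.mem_image.2 ⟨z, hz, h⟩)
    have key : ∀ f ⊆ e, (f.image c).card ≤ (f.image (Function.update c x b)).card := by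
      intro f hf
      by_cases hxf : x ∈ f
      · have : insert b ((f.image c).erase (c x)) ⊆ f.image (Function.update c x b) := by
          intro a ha
          rw [Finset.mem_insert, Finset.mem_erase, Finset.mem_image] at ha
          rw [Finset.mem_image]
          rcases ha with rfl | ⟨h, z, hz, rfl⟩
          · exact ⟨x, hxf, by simp⟩
          · refine ⟨z, hz, ?_⟩
            rw [Function.update_of_ne]
            rintro rfl
            exact h rfl
        have h3 := Finset.card_le_card this
        rw [Finset.card_insert_of_notMem, Finset.card_erase_of_mem (Finset.mem_image_of_mem c hxf)] at h3
        · omega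
        · intro h
          exact hb (Finset.image_subset_image hf (Finset.mem_of_mem_erase h))
      · apply le_of_eq
        congr 1
        apply Finset.image_congr
        intro z hz
        rw [Function.update_of_ne]
        rintro rfl
        exact hxf hz
    have hbig : (e.image c).card + 1 ≤ (e.image (Function.update c x b)).card := by
      rw [← Finset.card_insert_of_notMem hb]
      apply Finset.card_le_card
      intro a ha
      rw [Finset.mem_insert, Finset.mem_image] at ha
      rw [Finset.mem_image]
      rcases ha with rfl | ⟨z, hz, rfl⟩
      · exact ⟨x, hx, by simp⟩
      · by_cases hzx : z = x
        · subst hzx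
          exact ⟨y, hy, by rw [Function.update_of_ne (Ne.symm hxy), hc2]⟩
        · exact ⟨z, hz, by rw [Function.update_of_ne hzx]⟩
    obtain ⟨c', h3, h4⟩ := ih (Function.update c x b) (by omega)
    exact ⟨c', h3, fun f hf => (key f hf).trans (h4 f hf)⟩

theorem strong_aux {V : Type*} [DecidableEq V] (t : ℕ) : ∀ (H : Set (Finset V)),
    (∀ s : Finset (Finset V), ↑s ⊆ H → 2 ≤ s.card → s.card ≤ t →
      ∃ u : Finset V, t + 1 - s.card ≤ u.card ∧ ∀ f ∈ s, u ⊆ f) →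
    ∃ c : V → Fin (t + 1), ∀ e ∈ H, min e.card t ≤ (e.image c).card := by
  induction t with
  | zero => exact fun H _ => ⟨fun _ => 0, by simp⟩
  | succ t ih =>
    intro H hP
    rcases H.eq_empty_or_nonempty with rfl | hne
    · exact ⟨fun _ => 0, by simp⟩
    obtain ⟨e, he, hmin⟩ : ∃ e ∈ H, ∀ f ∈ H, f ⊆ e → f = e := by
      obtain ⟨e, he, h⟩ := WellFounded.has_min (measure (Finset.card (α := V))).wf H hne
      refine ⟨e, he, fun f hf hfe => Finset.eq_of_subset_of_card_le hfe ?_⟩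
      exact not_lt.1 (h f hf)
    obtain ⟨c0, hc0⟩ := ih {g | ∃ f ∈ H, f ≠ e ∧ f ∩ e = g} (by
      intro s hs h2 h3
      have hs' : ∀ g : Finset V, ∃ f, g ∈ s → f ∈ H ∧ f ≠ e ∧ f ∩ e = g := by
        intro g
        by_cases hg : g ∈ s
        · obtain ⟨f, hf⟩ := hs hg
          exact ⟨f, fun _ => hf⟩
        · exact ⟨∅, fun h => absurd h hg⟩
      choose F hF using hs'
      have hcard : (insert e (s.image F)).card = s.card + 1 := by
        rw [Finset.card_insert_of_notMem, Finset.card_image_of_injOn]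
        · intro a ha b hb hab
          rw [← (hF a ha).2.2, ← (hF b hb).2.2]
          rw [hab]
        · intro h
          obtain ⟨g, hg, h⟩ := Finset.mem_image.1 h
          exact (hF g hg).2.1 h
      obtain ⟨u, hu, hu2⟩ := hP (insert e (s.image F)) (by
        intro f hf
        rw [Finset.mem_coe, Finset.mem_insert, Finset.mem_image] at hf
        rcases hf with rfl | ⟨g, hg, rfl⟩
        · exact he
        · exact (hF g hg).1) (by omega) (by omega)
      refine ⟨u, by omega, fun g hg => ?_⟩
      rw [← (hF g hg).2.2]
      exact Finset.subset_inter
        (hu2 _ (Finset.mem_insert_of_mem (Finset.mem_image_of_mem F hg)))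
        (hu2 _ (Finset.mem_insert_self _ _)))
    obtain ⟨c1, h1, h2⟩ := recolor_aux (t + 1) e (t + 1) c0 (by omega)
    let c : V → Fin (t + 1 + 1) := fun v => if v ∈ e then (c1 v).castSucc else Fin.last _
    have hin : ∀ g ⊆ e, g.image c = (g.image c1).image Fin.castSucc := by
      intro g hg
      rw [Finset.image_image]
      apply Finset.image_congr
      intro v hv
      simp [c, hg hv]
    have hin2 : ∀ g ⊆ e, (g.image c).card = (g.image c1).card := by
      intro g hg
      rw [hin g hg, Finset.card_image_of_injective _ (Fin.castSucc_injective _)]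
    refine ⟨c, fun f hf => ?_⟩
    by_cases hfe : f = e
    · subst hfe
      rw [hin2 f (Finset.Subset.refl _)]
      exact h1
    obtain ⟨v, hv, hve⟩ : ∃ v ∈ f, v ∉ e := by
      by_contra hcon
      push Not at hcon
      exact hfe (hmin f hf hcon)
    have h3 : insert (Fin.last _) ((f ∩ e).image c) ⊆ f.image c := by
      intro a ha
      rcases Finset.mem_insert.1 ha with rfl | ha
      · exact Finset.mem_image.2 ⟨v, hv, by simp [c, hve]⟩
      · exact Finset.image_subset_image Finset.inter_subset_left ha
    have h4 := Finset.card_le_card h3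
    rw [Finset.card_insert_of_notMem, hin2 _ Finset.inter_subset_right] at h4
    · have h5 := h2 (f ∩ e) Finset.inter_subset_right
      have h6 := hc0 (f ∩ e) ⟨f, hf, hfe, rfl⟩
      have h7 : t ≤ (f ∩ e).card := by
        rcases Nat.eq_zero_or_pos t with h0 | h0
        · omega
        have hc : ({f, e} : Finset (Finset V)).card = 2 := Finset.card_pair hfe
        obtain ⟨u, hu, hu2⟩ := hP {f, e} (by
          intro g hg
          simp only [Finset.coe_insert, Finset.coe_singleton, Set.mem_insert_iff,
            Set.mem_singleton_iff] at hg
          rcases hg with rfl | rfl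
          · exact hf
          · exact he) (by omega) (by omega)
        have := Finset.card_le_card
          (Finset.subset_inter (hu2 f (by simp)) (hu2 e (by simp)))
        omega
      omega
    · rw [hin _ Finset.inter_subset_right]
      intro h
      obtain ⟨a, _, ha⟩ := Finset.mem_image.1 h
      exact (Fin.castSucc_lt_last a).ne ha

theorem property_Pt_has_tstrong_coloring
    {V : Type*} [DecidableEq V] (t : ℕ) (ht : 2 ≤ t) (H : Set (Finset V))
    (hPt : ∀ s : Finset (Finset V), ↑s ⊆ H → ∀ h2 : 2 ≤ s.card, s.card ≤ t →
      t + 1 - s.card ≤ (s.inf' (Finset.card_pos.mp (by omega)) id).card) :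
    ∃ c : V → Fin (t + 1), ∀ e ∈ H, min e.card t ≤ (e.image c).card := by
  apply strong_aux t H
  intro s hs h2 h3
  exact ⟨_, hPt s hs h2 h3, fun f hf => Finset.inf'_le id hf⟩
end
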